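/- Let G and H be groups. Every knapsack expression over the wreath product G ≀ H has a semilinear solution set if and only if every knapsack expression over G has a semilinear solution set and every knapsack expression over H has a semilinear solution set. (This is the non-effective content of the theorem that the class of knapsack-semilinear groups is closed under wreath products.) -/

import Mathlib

namespace WreathPaper

open Function

variable (G H : Type*) [Group G] [Group H]

/-- The automorphism of `H → G` (pointwise multiplication) given by translation by `h`. -/
def wreathAut (h : H) : MulAut (H → G) where
  toFun f := fun a => f (h⁻¹ * a)
  invFun f := fun a => f (h * a)
  left_inv f := by funext a; simp
  right_inv f := by funext a; simp
  map_mul' f g := rfl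

/-- The action of `H` on `H → G` by translation, as a homomorphism into `MulAut`. -/
def wreathphi : H →* MulAut (H → G) where
  toFun := wreathAut G H
  map_one' := by
    apply MulEquiv.toMonoidHom_injective
    ext f a
    simp [wreathAut]
  map_mul' h₁ h₂ := by
    apply MulEquiv.toMonoidHom_injective
    ext f a
    simp [wreathAut, mul_assoc]

lemma finite_mulSupport_shift {f : H → G} (hf : (mulSupport f).Finite) (h : H) :
    (mulSupport fun a => f (h * a)).Finite := by
  have : (fun a : H => f (h * a)) = f ∘ (fun a => h * a) := rfl
  rw [this, Function.mulSupport_comp_eq_preimage]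
  exact hf.preimage (fun x _ y _ hxy => by simpa using hxy)

/-- The restricted wreath product `G ≀ H`, as the subgroup of the (unrestricted)
semidirect product `(H → G) ⋊ H` consisting of pairs whose first component has
finite support. -/
def RW : Subgroup ((H → G) ⋊[wreathphi G H] H) where
  carrier := {x | (mulSupport x.left).Finite}
  one_mem' := by
    simp only [Set.mem_setOf_eq, SemidirectProduct.one_left]
    simp
  mul_mem' := by
    intro a b ha hb
    simp only [Set.mem_setOf_eq, SemidirectProduct.mul_left] at *
    refine Set.Finite.subset (Set.Finite.union ha
      (finite_mulSupport_shift G H hb a.right⁻¹)) ?_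
    exact Function.mulSupport_mul _ _
  inv_mem' := by
    intro a ha
    simp only [Set.mem_setOf_eq, SemidirectProduct.inv_left] at *
    have : (wreathphi G H a.right⁻¹ a.left⁻¹ : H → G)
        = fun x => (a.left (a.right * x))⁻¹ := by
      funext x
      simp [wreathphi, wreathAut]
    rw [this]
    have h2 : (mulSupport fun x => (a.left (a.right * x))⁻¹)
        = mulSupport fun x => a.left (a.right * x) := by
      simp [Function.mulSupport_inv]
    rw [h2]
    exact finite_mulSupport_shift G H ha a.right

/-- The projection `σ : G ≀ H → H`. -/
def σw (x : RW G H) : H := (x : (H → G) ⋊[wreathphi G H] H).right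

/-- The projection `τ : G ≀ H → G^(H)`. -/
def τw (x : RW G H) : H → G := (x : (H → G) ⋊[wreathphi G H] H).left

/-- The canonical embedding of `G` into `G ≀ H`: `g ↦ (f_g, 1)`. -/
def embG [DecidableEq H] (g : G) : RW G H :=
  ⟨⟨Pi.mulSingle (1 : H) g, 1⟩, by
    exact Set.Finite.subset (Set.finite_singleton (1 : H))
      Pi.mulSupport_mulSingle_subset⟩

/-- The canonical embedding of `H` into `G ≀ H`: `h ↦ (𝟙, h)`. -/
def embH (h : H) : RW G H :=
  ⟨⟨1, h⟩, by simp [RW]⟩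

end WreathPaper

namespace WreathPaper

/-- A subset of `ℕ^ι` is linear if it equals
`{v₀ + λ₁·v₁ + ⋯ + λ_n·v_n : λ₁, …, λ_n ∈ ℕ}` for some `v₀, …, v_n ∈ ℕ^ι`. -/
def LinearSet {ι : Type*} (A : Set (ι → ℕ)) : Prop :=
  ∃ (n : ℕ) (v0 : ι → ℕ) (v : Fin n → ι → ℕ),
    A = {u | ∃ lam : Fin n → ℕ, u = v0 + ∑ j, lam j • v j}

/-- A subset of `ℕ^ι` is semilinear if it is a finite union of linear sets. -/
def SemilinearSet {ι : Type*} (A : Set (ι → ℕ)) : Prop :=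
  ∃ (m : ℕ) (B : Fin m → Set (ι → ℕ)), (∀ i, LinearSet (B i)) ∧ A = ⋃ i, B i

/-- A group `L` is knapsack-semilinear (in the non-effective sense) if for
every knapsack expression `E = h₀ g₁^{x₁} h₁ ⋯ g_k^{x_k} h_k` over `L` (with
pairwise distinct variables `x₁, …, x_k`), the solution set
`Sol(E) = {ν ∈ ℕ^k : h₀ g₁^{ν(x₁)} h₁ ⋯ g_k^{ν(x_k)} h_k = 1}` is
semilinear. -/
def KnapsackSemilinear (L : Type*) [Group L] : Prop :=
  ∀ (k : ℕ) (h0 : L) (g h : Fin k → L),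
    SemilinearSet {ν : Fin k → ℕ |
      h0 * ((List.finRange k).map fun i => g i ^ ν i * h i).prod = 1}

end WreathPaper

/-!
Call a function `x ↦ g₁ ^ e₁ x * ⋯ * gₙ ^ eₙ x` with values in a group an exponent function if the
graphs of the `eᵢ` are semilinear. Semilinear sets are closed under projection and complement, so
over a knapsack-semilinear group the equations between exponent functions have semilinear solution
sets.

A product in `G ≀ H` is trivial if and only if its `H`-component and all its lamps are. For a
knapsack product the `H`-component is an exponent function of the exponents, and so is the lamp at
a position `u` that is itself an exponent function. For a power `g ^ n`, where `h` is the
`H`-component of `g`, the lamp at `u` is the product of the lamps of `g` at `(h ^ l)⁻¹ * u`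
for `l < n`. If `h` has order `m < ∞`, this is a power of the lamp of `g ^ m` times a product that
depends only on `n % m`. If `h` has infinite order, at most as many factors are nontrivial as `g`
has lit lamps, and the first index of a nontrivial factor is a function with semilinear graph, so
the factors can be split off one by one.

The positions with a nontrivial lamp lie on finitely many rays `j ↦ c (x, j)` with `c` an exponent
function, so that all lamps are trivial is a finite conjunction of conditions of the form: for
all `j`, an exponent function of `(x, j)` is trivial.
-/

namespace WreathPaper

open Function Set
open scoped Pointwise

section Semilinear

theorem linearSet_iff_isLinearSet {ι : Type*} {A : Set (ι → ℕ)} : LinearSet A ↔ IsLinearSet A := by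
  have coset_eq (n : ℕ) (v₀ : ι → ℕ) (v : Fin n → ι → ℕ) :
      v₀ +ᵥ (AddSubmonoid.closure (range v) : Set (ι → ℕ)) =
        {u | ∃ lam : Fin n → ℕ, u = v₀ + ∑ j, lam j • v j} := by
    ext u
    simp [mem_vadd_set, AddSubmonoid.mem_closure_range_iff_of_fintype, eq_comm]
  constructor
  · rintro ⟨n, v₀, v, rfl⟩
    exact ⟨v₀, range v, finite_range v, (coset_eq n v₀ v).symm⟩
  · rintro ⟨v₀, t, ht, rfl⟩
    obtain ⟨n, v, rfl⟩ := ht.fin_embedding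
    exact ⟨n, v₀, v, coset_eq n v₀ v⟩

theorem semilinearSet_iff_isSemilinearSet {ι : Type*} {A : Set (ι → ℕ)} :
    SemilinearSet A ↔ IsSemilinearSet A := by
  simp only [SemilinearSet, linearSet_iff_isLinearSet]
  constructor
  · rintro ⟨m, B, hB, rfl⟩
    exact .iUnion fun i ↦ (hB i).isSemilinearSet
  · rintro ⟨S, hS, hlin, rfl⟩
    obtain ⟨m, B, rfl⟩ := hS.fin_embedding
    exact ⟨m, B, fun i ↦ hlin _ (mem_range_self i), sUnion_range B⟩

variable {M N P : Type*} [AddCommMonoid M] [AddCommMonoid N] [AddCommMonoid P]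

theorem isSemilinearSet_setOfPred_exists {s : Set (M × N)} (hs : IsSemilinearSet s) :
    IsSemilinearSet {x | ∃ y, (x, y) ∈ s} := by
  convert hs.image (AddMonoidHom.fst M N)
  ext x
  simp

/-- Functions whose graph is a semilinear set; for `ℕ`-valued functions on `ℕ^k` these are the
functions definable in Presburger arithmetic. -/
def HasSemilinearGraph (f : M → N) : Prop :=
  IsSemilinearSet {z : M × N | f z.1 = z.2}

variable [AddMonoid.FG M] [AddMonoid.FG N] [AddMonoid.FG P]

theorem isSemilinearSet_setOfPred_forall {s : Set (M × N)} (hs : IsSemilinearSet s) :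
    IsSemilinearSet {x | ∀ y, (x, y) ∈ s} := by
  convert (isSemilinearSet_setOfPred_exists hs.compl).compl
  ext x
  simp

theorem HasSemilinearGraph.of_addMonoidHom (f : M →+ N) : HasSemilinearGraph f := by
  simpa [HasSemilinearGraph] using isSemilinearSet_setOfPred_eq (M := M × N) 0 0
    (f.comp (AddMonoidHom.fst M N)) (AddMonoidHom.snd M N)

theorem HasSemilinearGraph.id : HasSemilinearGraph (fun x : M ↦ x) :=
  .of_addMonoidHom (AddMonoidHom.id M)

theorem HasSemilinearGraph.eval {ι : Type*} [Finite ι] (i : ι) :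
    HasSemilinearGraph fun x : ι → ℕ ↦ x i :=
  .of_addMonoidHom (Pi.evalAddMonoidHom (fun _ ↦ ℕ) i)

theorem HasSemilinearGraph.const (b : N) : HasSemilinearGraph fun _ : M ↦ b := by
  simpa [HasSemilinearGraph] using isSemilinearSet_setOfPred_eq (M := M × N) b 0
    (0 : M × N →+ N) (AddMonoidHom.snd M N)

theorem HasSemilinearGraph.fst : HasSemilinearGraph (Prod.fst : M × N → M) :=
  .of_addMonoidHom (AddMonoidHom.fst M N)

theorem HasSemilinearGraph.snd : HasSemilinearGraph (Prod.snd : M × N → N) :=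
  .of_addMonoidHom (AddMonoidHom.snd M N)

theorem HasSemilinearGraph.isSemilinearSet_preimage {f : M → N} (hf : HasSemilinearGraph f)
    {s : Set N} (hs : IsSemilinearSet s) : IsSemilinearSet (f ⁻¹' s) := by
  convert isSemilinearSet_setOfPred_exists (hf.inter (hs.preimage (AddMonoidHom.snd M N)))
  ext x
  simp

theorem HasSemilinearGraph.prodMk {f : M → N} {g : M → P} (hf : HasSemilinearGraph f)
    (hg : HasSemilinearGraph g) : HasSemilinearGraph fun x ↦ (f x, g x) := by
  unfold HasSemilinearGraph
  convert (hf.preimage ((AddMonoidHom.id M).prodMap (AddMonoidHom.fst N P))).inter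
    (hg.preimage ((AddMonoidHom.id M).prodMap (AddMonoidHom.snd N P)))
  ext z
  simp [Prod.ext_iff]

theorem HasSemilinearGraph.comp {g : N → P} {f : M → N} (hg : HasSemilinearGraph g)
    (hf : HasSemilinearGraph f) : HasSemilinearGraph fun x ↦ g (f x) := by
  unfold HasSemilinearGraph
  convert isSemilinearSet_setOfPred_exists
    ((hf.preimage ((AddMonoidHom.fst M P).prodMap (AddMonoidHom.id N))).inter
      (hg.preimage ((AddMonoidHom.snd (M × P) N).prod
        ((AddMonoidHom.snd M P).comp (AddMonoidHom.fst (M × P) N)))))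
  simp

theorem HasSemilinearGraph.pi {ι : Type*} [Finite ι] {f : ι → M → ℕ}
    (hf : ∀ i, HasSemilinearGraph (f i)) : HasSemilinearGraph fun x i ↦ f i x := by
  unfold HasSemilinearGraph
  convert IsSemilinearSet.iInter fun i ↦
    (hf i).preimage ((AddMonoidHom.id M).prodMap (Pi.evalAddMonoidHom (fun _ : ι ↦ ℕ) i))
  ext z
  simp [funext_iff]

theorem HasSemilinearGraph.isSemilinearSet_eq {f g : M → N} (hf : HasSemilinearGraph f)
    (hg : HasSemilinearGraph g) : IsSemilinearSet {x | f x = g x} :=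
  (hf.prodMk hg).isSemilinearSet_preimage HasSemilinearGraph.id

theorem HasSemilinearGraph.add {f g : M → N} (hf : HasSemilinearGraph f)
    (hg : HasSemilinearGraph g) : HasSemilinearGraph fun x ↦ f x + g x :=
  (HasSemilinearGraph.of_addMonoidHom (AddMonoidHom.fst N N + AddMonoidHom.snd N N)).comp
    (hf.prodMk hg)

theorem HasSemilinearGraph.isSemilinearSet_le {f g : M → ℕ} (hf : HasSemilinearGraph f)
    (hg : HasSemilinearGraph g) : IsSemilinearSet {x | f x ≤ g x} := by
  convert isSemilinearSet_setOfPred_exists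
    ((hg.comp .fst).isSemilinearSet_eq ((hf.comp .fst).add (.snd (N := ℕ))))
  exact le_iff_exists_add

theorem HasSemilinearGraph.isSemilinearSet_lt {f g : M → ℕ} (hf : HasSemilinearGraph f)
    (hg : HasSemilinearGraph g) : IsSemilinearSet {x | f x < g x} :=
  (hf.add (.const 1)).isSemilinearSet_le hg

theorem HasSemilinearGraph.indicator {s : Set M} (hs : IsSemilinearSet s) {f : M → N}
    (hf : HasSemilinearGraph f) : HasSemilinearGraph (s.indicator f) := by
  unfold HasSemilinearGraph
  have hs' := hs.preimage (AddMonoidHom.fst M N)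
  convert (hs'.inter hf).union (hs'.compl.inter (HasSemilinearGraph.const (0 : N)))
  ext ⟨x, y⟩
  by_cases hx : x ∈ s <;> simp [hx]

theorem hasSemilinearGraph_sInf {s : Set (M × ℕ)} (hs : IsSemilinearSet s) :
    HasSemilinearGraph fun x ↦ sInf {n | (x, n) ∈ s} := by
  unfold HasSemilinearGraph
  have isSemilinearSet_lowerBounds : IsSemilinearSet {z : M × ℕ | ∀ m, (z.1, m) ∈ s → z.2 ≤ m} := by
    have hmem := hs.preimage ((AddMonoidHom.fst M ℕ).prodMap (AddMonoidHom.id ℕ))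
    convert isSemilinearSet_setOfPred_forall (hmem.compl.union
      ((HasSemilinearGraph.snd.comp .fst).isSemilinearSet_le .snd))
    simp [imp_iff_not_or]
  have isSemilinearSet_empty :=
    (isSemilinearSet_setOfPred_exists hs).compl.preimage (AddMonoidHom.fst M ℕ)
  convert (hs.inter isSemilinearSet_lowerBounds).union
    (isSemilinearSet_empty.inter (HasSemilinearGraph.snd.isSemilinearSet_eq (.const 0)))
  ext ⟨x, n⟩
  rcases {n | (x, n) ∈ s}.eq_empty_or_nonempty with hx | hx
  · have hx' : ∀ m, (x, m) ∉ s := fun m ↦ eq_empty_iff_forall_notMem.1 hx m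
    simp [hx', eq_comm]
  · have least : sInf {n | (x, n) ∈ s} = n ↔ IsLeast {n | (x, n) ∈ s} n :=
      ⟨fun h ↦ h ▸ isLeast_csInf hx, IsLeast.csInf_eq⟩
    obtain ⟨m, hm⟩ := hx
    have hx' : ∃ m, (x, m) ∈ s := ⟨m, hm⟩
    simp [least, hx', IsLeast, lowerBounds]

theorem hasSemilinearGraph_natDiv {m : ℕ} (hm : 0 < m) :
    HasSemilinearGraph fun n : ℕ ↦ n / m := by
  unfold HasSemilinearGraph
  have hmul : HasSemilinearGraph fun z : ℕ × ℕ ↦ z.2 * m :=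
    (HasSemilinearGraph.of_addMonoidHom (AddMonoidHom.mulRight m)).comp .snd
  convert (hmul.isSemilinearSet_le .fst).inter
    (HasSemilinearGraph.fst.isSemilinearSet_lt (hmul.add (.const m)))
  ext z
  simp only [Nat.div_eq_iff hm, mem_inter_iff, mem_ofPred_eq]
  omega

end Semilinear

section ExponentFunctions

variable {M N G H : Type*} [AddCommMonoid M] [AddCommMonoid N] [Group G] [Group H]

variable (M G) in
/-- The functions `x ↦ g₁ ^ e₁ x * ⋯ * gₙ ^ eₙ x` on `M` whose exponents `eᵢ` have semilinear
graphs: the left-hand sides of knapsack equations, with Presburger-definable exponents. -/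
def exponentFunctions : Subgroup (M → G) :=
  .closure {F | ∃ (g : G) (e : M → ℕ), HasSemilinearGraph e ∧ F = fun x ↦ g ^ e x}

theorem pow_mem_exponentFunctions (g : G) {e : M → ℕ} (he : HasSemilinearGraph e) :
    (fun x ↦ g ^ e x) ∈ exponentFunctions M G :=
  Subgroup.subset_closure ⟨g, e, he, rfl⟩

theorem exists_eq_prod_pow_of_mem_exponentFunctions {F : M → G}
    (hF : F ∈ exponentFunctions M G) :
    ∃ (k : ℕ) (g : Fin k → G) (e : Fin k → M → ℕ), (∀ i, HasSemilinearGraph (e i)) ∧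
      F = fun x ↦ ((List.finRange k).map fun i ↦ g i ^ e i x).prod := by
  rw [exponentFunctions, ← Subgroup.mem_toSubmonoid, Subgroup.closure_toSubmonoid] at hF
  obtain ⟨L, hL, rfl⟩ := Submonoid.exists_list_of_mem_closure hF
  have pow_of_mem (i : Fin L.length) :
      ∃ (g : G) (e : M → ℕ), HasSemilinearGraph e ∧ L.get i = fun x ↦ g ^ e x := by
    rcases hL _ (L.get_mem i) with h | ⟨g, e, he, h⟩
    · exact h
    · exact ⟨g⁻¹, e, he, by rw [← inv_inv (L.get i), h]; simp [funext_iff]⟩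
  choose g e he hge using pow_of_mem
  refine ⟨L.length, g, e, he, funext fun x ↦ ?_⟩
  conv_lhs => rw [← L.map_get_finRange, Pi.list_prod_apply, List.map_map]
  exact congrArg List.prod (List.map_congr_left fun i _ ↦ congrFun (hge i) x)

variable [AddMonoid.FG M] [AddMonoid.FG N]

theorem const_mem_exponentFunctions (g : G) : (fun _ ↦ g) ∈ exponentFunctions M G := by
  simpa using pow_mem_exponentFunctions g (.const (M := M) 1)

theorem comp_mem_exponentFunctions {F : N → G} (hF : F ∈ exponentFunctions N G) {f : M → N}
    (hf : HasSemilinearGraph f) : (fun x ↦ F (f x)) ∈ exponentFunctions M G := by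
  induction hF using Subgroup.closure_induction with
  | mem F hF =>
    obtain ⟨g, e, he, rfl⟩ := hF
    exact pow_mem_exponentFunctions g (he.comp hf)
  | one => exact one_mem _
  | mul F F' _ _ hF hF' => exact mul_mem hF hF'
  | inv F _ hF => exact inv_mem hF

theorem mulIndicator_mem_exponentFunctions {s : Set M} (hs : IsSemilinearSet s) {F : M → G}
    (hF : F ∈ exponentFunctions M G) : s.mulIndicator F ∈ exponentFunctions M G := by
  induction hF using Subgroup.closure_induction with
  | mem F hF =>
    obtain ⟨g, e, he, rfl⟩ := hF
    convert pow_mem_exponentFunctions g (he.indicator hs) with x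
    by_cases hx : x ∈ s <;> simp [hx]
  | one => simp
  | mul F F' _ _ hF hF' => simpa only [mulIndicator_mul'] using mul_mem hF hF'
  | inv F _ hF => simpa only [mulIndicator_inv'] using inv_mem hF

theorem isSemilinearSet_setOfPred_eq_one (hG : KnapsackSemilinear G) {F : M → G}
    (hF : F ∈ exponentFunctions M G) : IsSemilinearSet {x | F x = 1} := by
  obtain ⟨k, g, e, he, rfl⟩ := exists_eq_prod_pow_of_mem_exponentFunctions hF
  simpa using (HasSemilinearGraph.pi he).isSemilinearSet_preimage
    (semilinearSet_iff_isSemilinearSet.1 (hG k 1 g fun _ ↦ 1))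

theorem isSemilinearSet_eqOn (hG : KnapsackSemilinear G) {F F' : M → G}
    (hF : F ∈ exponentFunctions M G) (hF' : F' ∈ exponentFunctions M G) :
    IsSemilinearSet {x | F x = F' x} := by
  simpa [mul_inv_eq_one] using isSemilinearSet_setOfPred_eq_one hG (mul_mem hF (inv_mem hF'))

theorem mulIndicator_preimage_mem_exponentFunctions {κ : Type*} {c : M → κ} {F : κ → M → G}
    (s : Finset κ) (hc : ∀ k ∈ s, IsSemilinearSet {x | c x = k})
    (hF : ∀ k ∈ s, F k ∈ exponentFunctions M G) :
    (c ⁻¹' s).mulIndicator (fun x ↦ F (c x) x) ∈ exponentFunctions M G := by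
  classical
  induction s using Finset.induction_on with
  | empty => simpa using const_mem_exponentFunctions 1
  | insert k s hk ih =>
    simp only [Finset.forall_mem_insert] at hc hF
    have on_fiber : ({x | c x = k}).mulIndicator (fun x ↦ F (c x) x) =
        ({x | c x = k}).mulIndicator (F k) :=
      mulIndicator_congr fun x hx ↦ congrFun (congrArg F hx) x
    have disjoint_fiber : Disjoint {x | c x = k} (c ⁻¹' s) :=
      disjoint_left.2 fun x hx hxs ↦ hk (hx ▸ hxs)
    have preimage_insert : c ⁻¹' ↑(insert k s) = {x | c x = k} ∪ c ⁻¹' s := by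
      ext x
      simp
    rw [preimage_insert, mulIndicator_union_of_disjoint disjoint_fiber, on_fiber]
    exact mul_mem (mulIndicator_mem_exponentFunctions hc.1 hF.1) (ih hc.2 hF.2)

theorem comp_pow_mem_exponentFunctions (hH : KnapsackSemilinear H) {f : H → G}
    (hf : (mulSupport f).Finite) {u : M → H} (hu : u ∈ exponentFunctions M H) {e : M → ℕ}
    (he : HasSemilinearGraph e) : (fun x ↦ f (u x) ^ e x) ∈ exponentFunctions M G := by
  have := mulIndicator_preimage_mem_exponentFunctions (c := u) (F := fun a x ↦ f a ^ e x)
    hf.toFinset (fun a _ ↦ isSemilinearSet_eqOn hH hu (const_mem_exponentFunctions a))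
    (fun a _ ↦ pow_mem_exponentFunctions (f a) he)
  rwa [mulIndicator_eq_self.2] at this
  intro x hx
  simp only [hf.coe_toFinset, mem_preimage, mem_mulSupport] at hx ⊢
  exact fun h ↦ hx (by simp [h])

theorem comp_mem_exponentFunctions_of_finite_mulSupport (hH : KnapsackSemilinear H) {f : H → G}
    (hf : (mulSupport f).Finite) {u : M → H} (hu : u ∈ exponentFunctions M H) :
    (fun x ↦ f (u x)) ∈ exponentFunctions M G := by
  simpa using comp_pow_mem_exponentFunctions hH hf hu (.const 1)

theorem prod_map_range_eq_mulIndicator_mul {A : Type*} [Monoid A] {a : ℕ → A} {l : ℕ}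
    (ha : ∀ i < l, a i = 1) (n : ℕ) :
    ((List.range n).map a).prod =
      (if l < n then a l else 1) * ((List.range n).map (mulIndicator {l}ᶜ a)).prod := by
  induction n with
  | zero => simp
  | succ n ih =>
    rw [List.prod_range_succ, List.prod_range_succ, ih]
    rcases lt_trichotomy n l with hn | rfl | hn
    · simp [ha n hn, hn.not_gt, (Nat.succ_le_of_lt hn).not_gt, mulIndicator_apply]
    · have prod_eq_one : ((List.range n).map (mulIndicator {n}ᶜ a)).prod = 1 :=
        List.prod_eq_one <| by
          simp only [List.mem_map, List.mem_range]
          rintro _ ⟨i, hi, rfl⟩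
          simp [ha i hi]
      simp [prod_eq_one]
    · simp [hn, hn.ne', Nat.lt_succ_of_lt hn, mul_assoc]

theorem encard_sdiff_singleton_sInf_le {s : Set ℕ} {K : ℕ} (hs : s.encard ≤ K + 1) :
    (s \ {sInf s}).encard ≤ K := by
  rcases s.eq_empty_or_nonempty with rfl | nonempty
  · simp
  · rwa [← encard_sdiff_singleton_add_one (Nat.sInf_mem nonempty),
      ENat.add_le_add_iff_right ENat.one_ne_top] at hs

theorem prod_range_mem_exponentFunctions {T : Set (M × ℕ)} (hT : IsSemilinearSet T) {K : ℕ}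
    (hK : ∀ x, {l | (x, l) ∈ T}.encard ≤ K) {φ : M × ℕ → G}
    (hφ : φ ∈ exponentFunctions (M × ℕ) G) (hφT : mulSupport φ ⊆ T) {e : M → ℕ}
    (he : HasSemilinearGraph e) :
    (fun x ↦ ((List.range (e x)).map fun l ↦ φ (x, l)).prod) ∈ exponentFunctions M G := by
  induction K generalizing T φ with
  | zero =>
    have hφ_one : φ = 1 := by
      rw [← mulSupport_eq_empty_iff, ← subset_empty_iff]
      intro z hz
      have fiber_empty := hK z.1
      simp only [Nat.cast_zero, nonpos_iff_eq_zero, encard_eq_zero] at fiber_empty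
      exact fiber_empty.subset (hφT hz)
    simpa [hφ_one] using const_mem_exponentFunctions 1
  | succ K ih =>
    have first_graph := hasSemilinearGraph_sInf hT
    set first : M → ℕ := fun x ↦ sInf {l | (x, l) ∈ T}
    set D : Set (M × ℕ) := {z | z.2 = first z.1}ᶜ
    have hD : IsSemilinearSet D :=
      (HasSemilinearGraph.snd.isSemilinearSet_eq (first_graph.comp .fst)).compl
    have split_first (x : M) : ((List.range (e x)).map fun l ↦ φ (x, l)).prod =
        {x | first x < e x}.mulIndicator (fun x ↦ φ (x, first x)) x *
          ((List.range (e x)).map fun l ↦ D.mulIndicator φ (x, l)).prod := by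
      have before_first (l : ℕ) (hl : l < first x) : φ (x, l) = 1 :=
        of_not_not fun h ↦ Nat.notMem_of_lt_sInf hl (hφT h)
      rw [prod_map_range_eq_mulIndicator_mul before_first (e x), mulIndicator_apply]
      congr!
    have first_mem : (fun x ↦ φ (x, first x)) ∈ exponentFunctions M G :=
      comp_mem_exponentFunctions hφ (HasSemilinearGraph.id.prodMk first_graph)
    simp only [split_first]
    refine mul_mem (mulIndicator_mem_exponentFunctions (first_graph.isSemilinearSet_lt he)
      first_mem) (ih (hT.inter hD) (fun x ↦ encard_sdiff_singleton_sInf_le (hK x))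
      (mulIndicator_mem_exponentFunctions hD hφ) ?_)
    rw [mulSupport_mulIndicator, inter_comm]
    exact inter_subset_inter_left _ hφT

end ExponentFunctions

section WreathProduct

variable {G H : Type*} [Group G] [Group H]

theorem τw_mul_apply (x y : RW G H) (a : H) :
    τw G H (x * y) a = τw G H x a * τw G H y ((σw G H x)⁻¹ * a) :=
  rfl

theorem σw_pow (g : RW G H) (n : ℕ) : σw G H (g ^ n) = σw G H g ^ n :=
  map_pow (SemidirectProduct.rightHom.comp (RW G H).subtype) g n

theorem τw_pow_apply (g : RW G H) (n : ℕ) (a : H) :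
    τw G H (g ^ n) a =
      ((List.range n).map fun l ↦ τw G H g ((σw G H g ^ l)⁻¹ * a)).prod := by
  induction n with
  | zero => rfl
  | succ n ih => rw [pow_succ, τw_mul_apply, ih, σw_pow, List.prod_range_succ]

theorem wreath_eq_one_iff {x : RW G H} : x = 1 ↔ σw G H x = 1 ∧ ∀ a, τw G H x a = 1 := by
  rw [Subtype.ext_iff, SemidirectProduct.ext_iff, and_comm, funext_iff]
  rfl

theorem finite_mulSupport_τw (x : RW G H) : (mulSupport (τw G H x)).Finite :=
  x.2

variable {M : Type*} [AddCommMonoid M] [AddMonoid.FG M]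

theorem τw_pow_mem_exponentFunctions_of_isOfFinOrder (hH : KnapsackSemilinear H) {g : RW G H}
    (hg : IsOfFinOrder (σw G H g)) {u : M → H} (hu : u ∈ exponentFunctions M H) {e : M → ℕ}
    (he : HasSemilinearGraph e) : (fun x ↦ τw G H (g ^ e x) (u x)) ∈ exponentFunctions M G := by
  set m := orderOf (σw G H g)
  have m_pos : 0 < m := hg.orderOf_pos
  have σw_pow_m (q : ℕ) : σw G H ((g ^ m) ^ q) = 1 := by
    rw [σw_pow, σw_pow, pow_orderOf_eq_one, one_pow]
  have split_period (x : M) : τw G H (g ^ e x) (u x) =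
      τw G H (g ^ m) (u x) ^ (e x / m) * τw G H (g ^ (e x % m)) (u x) := by
    have σw_eq_one : σw G H (g ^ m) = 1 := by simpa using σw_pow_m 1
    conv_lhs => rw [← Nat.div_add_mod (e x) m, pow_add, pow_mul, τw_mul_apply, σw_pow_m]
    simp [τw_pow_apply (g ^ m), σw_eq_one]
  have residue_class (k : ℕ) : IsSemilinearSet {x | e x % m = k} :=
    he.isSemilinearSet_preimage (s := {n | n % m = k}) <|
      Nat.isSemilinearSet_iff_ultimately_periodic.2 ⟨0, m, m_pos, fun n _ ↦ by simp⟩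
  have remainder_mem :
      (fun x ↦ τw G H (g ^ (e x % m)) (u x)) ∈ exponentFunctions M G := by
    have := mulIndicator_preimage_mem_exponentFunctions (c := fun x ↦ e x % m)
      (F := fun k x ↦ τw G H (g ^ k) (u x)) (Finset.range m) (fun k _ ↦ residue_class k)
      (fun k _ ↦ comp_mem_exponentFunctions_of_finite_mulSupport hH (finite_mulSupport_τw _) hu)
    rwa [mulIndicator_eq_self.2] at this
    exact fun x _ ↦ by simpa using Nat.mod_lt _ m_pos
  simp only [split_period]
  exact mul_mem (comp_pow_mem_exponentFunctions hH (finite_mulSupport_τw _) hu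
    ((hasSemilinearGraph_natDiv m_pos).comp he)) remainder_mem

theorem encard_setOfPred_inv_pow_mul_mem_le {h : H} (hh : ¬IsOfFinOrder h) (s : Set H) (a : H) :
    {l : ℕ | (h ^ l)⁻¹ * a ∈ s}.encard ≤ s.encard :=
  encard_le_encard_of_injOn (f := fun l ↦ (h ^ l)⁻¹ * a) (fun _ hl ↦ hl) fun i _ j _ hij ↦
    injective_pow_iff_not_isOfFinOrder.2 hh (by simpa using hij)

theorem τw_pow_mem_exponentFunctions_of_not_isOfFinOrder (hH : KnapsackSemilinear H)
    {g : RW G H} (hg : ¬IsOfFinOrder (σw G H g)) {u : M → H} (hu : u ∈ exponentFunctions M H)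
    {e : M → ℕ} (he : HasSemilinearGraph e) :
    (fun x ↦ τw G H (g ^ e x) (u x)) ∈ exponentFunctions M G := by
  have supp_finite := finite_mulSupport_τw g
  have position_mem :
      (fun z : M × ℕ ↦ (σw G H g ^ z.2)⁻¹ * u z.1) ∈ exponentFunctions (M × ℕ) H :=
    mul_mem (inv_mem (pow_mem_exponentFunctions _ .snd)) (comp_mem_exponentFunctions hu .fst)
  have isSemilinearSet_hits :
      IsSemilinearSet {z : M × ℕ | (σw G H g ^ z.2)⁻¹ * u z.1 ∈ mulSupport (τw G H g)} := by
    convert IsSemilinearSet.biUnion supp_finite fun b _ ↦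
      isSemilinearSet_eqOn hH position_mem (const_mem_exponentFunctions b)
    ext z
    simp
  simp only [τw_pow_apply]
  refine prod_range_mem_exponentFunctions isSemilinearSet_hits (K := supp_finite.toFinset.card)
    (fun x ↦ ?_) (comp_mem_exponentFunctions_of_finite_mulSupport hH supp_finite position_mem)
    subset_rfl he
  rw [← supp_finite.encard_eq_coe_toFinset_card]
  exact encard_setOfPred_inv_pow_mul_mem_le hg _ (u x)

theorem τw_pow_mem_exponentFunctions (hH : KnapsackSemilinear H) (g : RW G H) {u : M → H}
    (hu : u ∈ exponentFunctions M H) {e : M → ℕ} (he : HasSemilinearGraph e) :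
    (fun x ↦ τw G H (g ^ e x) (u x)) ∈ exponentFunctions M G := by
  by_cases hg : IsOfFinOrder (σw G H g)
  · exact τw_pow_mem_exponentFunctions_of_isOfFinOrder hH hg hu he
  · exact τw_pow_mem_exponentFunctions_of_not_isOfFinOrder hH hg hu he

/-- Families of elements of `G ≀ H` whose `H`-component is an exponent function and whose lamps
are exponent functions along any exponent function of positions. As `Z x` may have arbitrarily
large support, the support is covered by the values of finitely many exponent functions with an
extra parameter `j : ℕ`, on which the positions of the lamps being read may therefore depend. -/
structure IsExponentFamily (Z : M → RW G H) : Prop where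
  base : (fun x ↦ σw G H (Z x)) ∈ exponentFunctions M H
  lamp : ∀ u ∈ exponentFunctions (M × ℕ) H,
    (fun z ↦ τw G H (Z z.1) (u z)) ∈ exponentFunctions (M × ℕ) G
  support : ∃ C : Finset (M × ℕ → H), (∀ c ∈ C, c ∈ exponentFunctions (M × ℕ) H) ∧
    ∀ x a, τw G H (Z x) a ≠ 1 → ∃ c ∈ C, ∃ j, c (x, j) = a

namespace IsExponentFamily

variable {Z Z' : M → RW G H}

theorem mul (hZ : IsExponentFamily Z) (hZ' : IsExponentFamily Z') :
    IsExponentFamily fun x ↦ Z x * Z' x where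
  base := mul_mem hZ.base hZ'.base
  lamp u hu := mul_mem (hZ.lamp u hu)
    (hZ'.lamp _ (mul_mem (inv_mem (comp_mem_exponentFunctions hZ.base .fst)) hu))
  support := by
    classical
    obtain ⟨C, hC, hCZ⟩ := hZ.support
    obtain ⟨C', hC', hCZ'⟩ := hZ'.support
    have base_fst_mem := comp_mem_exponentFunctions hZ.base (.fst (M := M) (N := ℕ))
    set s : M × ℕ → H := fun z ↦ σw G H (Z z.1)
    refine ⟨C ∪ C'.image (s * ·), fun c hc ↦ ?_, fun x a h ↦ ?_⟩
    · rcases Finset.mem_union.1 hc with hc | hc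
      · exact hC c hc
      · obtain ⟨c', hc', rfl⟩ := Finset.mem_image.1 hc
        exact mul_mem base_fst_mem (hC' c' hc')
    · by_cases ha : τw G H (Z x) a = 1
      · have ha' : τw G H (Z' x) ((σw G H (Z x))⁻¹ * a) ≠ 1 := by
          rwa [τw_mul_apply, ha, one_mul] at h
        obtain ⟨c, hc, j, hj⟩ := hCZ' x _ ha'
        exact ⟨s * c, Finset.mem_union_right _ (Finset.mem_image_of_mem _ hc), j,
          by simp [s, hj]⟩
      · obtain ⟨c, hc, j, hj⟩ := hCZ x a ha
        exact ⟨c, Finset.mem_union_left _ hc, j, hj⟩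

theorem pow (hH : KnapsackSemilinear H) (g : RW G H) {e : M → ℕ} (he : HasSemilinearGraph e) :
    IsExponentFamily fun x ↦ g ^ e x where
  base := by simpa only [σw_pow] using pow_mem_exponentFunctions _ he
  lamp u hu := τw_pow_mem_exponentFunctions hH g hu (he.comp .fst)
  support := by
    classical
    refine ⟨(finite_mulSupport_τw g).toFinset.image fun b z ↦ σw G H g ^ z.2 * b,
      fun c hc ↦ ?_, fun x a h ↦ ?_⟩
    · obtain ⟨b, -, rfl⟩ := Finset.mem_image.1 hc
      exact mul_mem (pow_mem_exponentFunctions _ .snd) (const_mem_exponentFunctions b)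
    · obtain ⟨j, -, hj⟩ : ∃ j < e x, τw G H g ((σw G H g ^ j)⁻¹ * a) ≠ 1 := by
        contrapose! h
        rw [τw_pow_apply]
        exact List.prod_eq_one (by simpa using h)
      exact ⟨_, Finset.mem_image_of_mem _ ((finite_mulSupport_τw g).mem_toFinset.2 hj), j,
        by simp⟩

theorem const (hH : KnapsackSemilinear H) (g : RW G H) : IsExponentFamily fun _ : M ↦ g := by
  simpa using pow hH g (.const (M := M) 1)

theorem list_prod {ι : Type*} {W : ι → M → RW G H} (hW : ∀ i, IsExponentFamily (W i))
    (L : List ι) : IsExponentFamily fun x ↦ (L.map fun i ↦ W i x).prod := by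
  induction L with
  | nil => exact ⟨one_mem _, fun _ _ ↦ one_mem _, ∅, by simp, fun _ _ h ↦ absurd rfl h⟩
  | cons i L ih => simpa using (hW i).mul ih

theorem isSemilinearSet_eq_one (hG : KnapsackSemilinear G) (hH : KnapsackSemilinear H)
    (hZ : IsExponentFamily Z) : IsSemilinearSet {x | Z x = 1} := by
  obtain ⟨C, hC, hCZ⟩ := hZ.support
  have lamps_off_iff (x : M) :
      (∀ a, τw G H (Z x) a = 1) ↔ ∀ c ∈ C, ∀ j, τw G H (Z x) (c (x, j)) = 1 := by
    refine ⟨fun h c _ j ↦ h _, fun h a ↦ of_not_not fun ha ↦ ?_⟩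
    obtain ⟨c, hc, j, rfl⟩ := hCZ x a ha
    exact ha (h c hc j)
  convert (isSemilinearSet_setOfPred_eq_one hH hZ.base).inter
    (IsSemilinearSet.biInter_finset (s := C) fun c hc ↦ isSemilinearSet_setOfPred_forall
      (isSemilinearSet_setOfPred_eq_one hG (hZ.lamp c (hC c hc))))
  ext x
  simp [wreath_eq_one_iff, lamps_off_iff]

end IsExponentFamily

theorem KnapsackSemilinear.wreath (hG : KnapsackSemilinear G) (hH : KnapsackSemilinear H) :
    KnapsackSemilinear (RW G H) := fun k h₀ g h ↦
  have factor (i : Fin k) : IsExponentFamily fun ν : Fin k → ℕ ↦ g i ^ ν i * h i :=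
    (IsExponentFamily.pow hH (g i) (.eval i)).mul (.const hH (h i))
  semilinearSet_iff_isSemilinearSet.2 <|
    ((IsExponentFamily.const hH h₀).mul (.list_prod factor _)).isSemilinearSet_eq_one hG hH

theorem KnapsackSemilinear.of_injective {K L : Type*} [Group K] [Group L]
    (hL : KnapsackSemilinear L) (f : K →* L) (hf : Injective f) : KnapsackSemilinear K := by
  intro k h₀ g h
  convert hL k (f h₀) (f ∘ g) (f ∘ h) using 2
  ext ν
  rw [← map_eq_one_iff f hf, map_mul, map_list_prod, List.map_map]
  simp [Function.comp_def]

theorem KnapsackSemilinear.left_of_wreath (h : KnapsackSemilinear (RW G H)) :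
    KnapsackSemilinear G := by
  classical
  exact h.of_injective
    ((SemidirectProduct.inl.comp (MonoidHom.mulSingle (fun _ ↦ G) 1)).codRestrict (RW G H)
      fun g ↦ (embG G H g).2)
    (MonoidHom.injective_codRestrict _ _ _ |>.2 <|
      SemidirectProduct.inl_injective.comp (Pi.mulSingle_injective (M := fun _ ↦ G) 1))

theorem KnapsackSemilinear.right_of_wreath (h : KnapsackSemilinear (RW G H)) :
    KnapsackSemilinear H :=
  h.of_injective (SemidirectProduct.inr.codRestrict (RW G H) fun h ↦ (embH G H h).2)
    (MonoidHom.injective_codRestrict _ _ _ |>.2 SemidirectProduct.inr_injective)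

end WreathProduct

end WreathPaper

open WreathPaper Function in
/-- Every knapsack expression over the (restricted) wreath product `G ≀ H` has
a semilinear solution set if and only if every knapsack expression over `G`
has a semilinear solution set and every knapsack expression over `H` has a
semilinear solution set. -/
theorem statement12 (G H : Type*) [Group G] [Group H] :
    KnapsackSemilinear ↥(RW G H) ↔ KnapsackSemilinear G ∧ KnapsackSemilinear H :=
  ⟨fun h ↦ ⟨h.left_of_wreath, h.right_of_wreath⟩, fun ⟨hG, hH⟩ ↦ hG.wreath hH⟩
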